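/- Let a, b : ℝ² → ℝ be smooth compactly supported functions. Then ‖ab‖_{Ḣ^{-1/2}(ℝ²)} ≤ C ‖a‖_{Ḣ^{1/2}(ℝ²)} ‖b‖_{L²(ℝ²)} for a universal constant C. -/

import Mathlib

open MeasureTheory Real
open scoped FourierTransform ENNReal

noncomputable section

/-- `ℝ^d` as a Euclidean space. -/
abbrev E (d : ℕ) := EuclideanSpace ℝ (Fin d)

/-- Homogeneous Sobolev norm `‖f‖_{Ḣ^s(ℝ^d)} = (∫ |ξ|^{2s} |𝓕f(ξ)|² dξ)^{1/2}`. -/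
noncomputable def hNorm (d : ℕ) (s : ℝ) (f : E d → ℂ) : ℝ :=
  (∫ ξ : E d, ‖ξ‖ ^ (2 * s) * ‖𝓕 f ξ‖ ^ 2) ^ (1/2 : ℝ)

/-!
By Plancherel the claim is a weighted `L²` bound for the convolution of `|𝓕 f|` and `|𝓕 g|`. At the
output frequency `ξ`, split the convolution integral over `η`, the frequency of `f`. Where
`|η| ≤ |ξ|`, Cauchy–Schwarz against the weight `|η|^{2s}` costs
`∫_{|η| ≤ |ξ|} |η|^{-2s} dη ≲ |ξ|^{d - 2s}`, exactly what the output weight `|ξ|^{2s - d}` absorbs.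
Where `|η| > |ξ|`, the unweighted Cauchy–Schwarz inequality leaves `∫_{|η| > |ξ|} |𝓕 f(η)|² dη`, and
exchanging the order of integration turns the output weight into
`∫_{|ξ| < |η|} |ξ|^{2s - d} dξ ≲ |η|^{2s}`.
-/

open Metric Module FourierTransform
open scoped SchwartzMap Convolution

theorem sq_lintegral_mul_le {α : Type*} [MeasurableSpace α] {μ : Measure α} {f g : α → ℝ≥0∞}
    (hf : AEMeasurable f μ) (hg : AEMeasurable g μ) :
    (∫⁻ x, f x * g x ∂μ) ^ 2 ≤ (∫⁻ x, f x ^ 2 ∂μ) * ∫⁻ x, g x ^ 2 ∂μ := by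
  have holder := ENNReal.lintegral_mul_le_Lp_mul_Lq μ Real.HolderConjugate.two_two hf hg
  have sq_rpow_half (z : ℝ≥0∞) : (z ^ (1 / 2 : ℝ)) ^ 2 = z := by
    rw [← ENNReal.rpow_mul_natCast]
    norm_num
  simpa only [ENNReal.rpow_two, Pi.mul_apply, mul_pow, sq_rpow_half] using
    pow_le_pow_left' holder 2

theorem lintegral_lconvolution {G : Type*} [AddGroup G] [MeasurableSpace G] [MeasurableAdd₂ G]
    [MeasurableNeg G] {μ : Measure G} [SFinite μ] [μ.IsAddLeftInvariant] {f g : G → ℝ≥0∞}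
    (hf : Measurable f) (hg : Measurable g) :
    ∫⁻ x, (f ⋆ₗ[μ] g) x ∂μ = (∫⁻ x, f x ∂μ) * ∫⁻ x, g x ∂μ := by
  simp only [lconvolution_def]
  rw [lintegral_lintegral_swap (by fun_prop), ← lintegral_mul_const _ hf]
  refine lintegral_congr fun y => ?_
  rw [lintegral_const_mul _ (by fun_prop), lintegral_add_left_eq_self g (-y)]

theorem measurable_setLIntegral_compl_closedBall {V : Type*} [NormedAddCommGroup V]
    [MeasurableSpace V] [OpensMeasurableSpace V] {μ : Measure V} (f : V → ℝ≥0∞) :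
    Measurable fun ξ : V => ∫⁻ η in (closedBall 0 ‖ξ‖)ᶜ, f η ∂μ := by
  have antitone : Antitone fun r : ℝ => ∫⁻ η in (closedBall (0 : V) r)ᶜ, f η ∂μ := fun _ _ hr =>
    lintegral_mono_set (Set.compl_subset_compl.2 (closedBall_subset_closedBall hr))
  exact antitone.measurable.comp measurable_norm

section WeightedConvolution

variable {V : Type*} [NormedAddCommGroup V] [NormedSpace ℝ V] [FiniteDimensional ℝ V]
  [MeasurableSpace V] [BorelSpace V] {μ : Measure V} {t : ℝ}

/-- The `t`-th absolute moment `∫_{‖ξ‖ ≤ 1} ‖ξ‖ ^ t dμ` of the closed unit ball, the constant in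
the estimates for the power weights `‖ξ‖ ^ t`. -/
def unitBallMoment (μ : Measure V) (t : ℝ) : ℝ≥0∞ :=
  ∫⁻ ξ in closedBall 0 1, ‖ξ‖ₑ ^ t ∂μ

variable [Nontrivial V] [μ.IsAddHaarMeasure]

theorem unitBallMoment_ne_top (ht : -(finrank ℝ V : ℝ) < t) : unitBallMoment μ t ≠ ⊤ := by
  have integrable : IntegrableOn (fun ξ : V => ‖ξ‖ ^ t) (ball 0 2) μ :=
    integrableOn_ball_of_norm_le_rpow (C := 1) (α := -t) finrank_pos (by linarith)
      (.of_forall fun ξ => by simp [abs_of_nonneg (Real.rpow_nonneg (norm_nonneg ξ) t)])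
      (Measurable.aestronglyMeasurable (by fun_prop))
  have integrable_closedBall := integrable.mono_set
    (closedBall_subset_ball (x := (0 : V)) one_lt_two)
  refine (lintegral_congr_ae ?_).trans_lt integrable_closedBall.hasFiniteIntegral |>.ne
  filter_upwards [ae_restrict_of_ae (Measure.ae_ne μ 0)] with ξ hξ
  rw [Real.enorm_of_nonneg (by positivity), ← ENNReal.ofReal_rpow_of_pos (norm_pos_iff.2 hξ),
    ofReal_norm]

theorem setLIntegral_closedBall_enorm_rpow (ht : -(finrank ℝ V : ℝ) < t) (x : V) :
    ∫⁻ ξ in closedBall 0 ‖x‖, ‖ξ‖ₑ ^ t ∂μ =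
      unitBallMoment μ t * ‖x‖ₑ ^ (finrank ℝ V + t) := by
  rcases eq_or_ne x 0 with rfl | hx
  · simp [ENNReal.zero_rpow_of_pos (show 0 < finrank ℝ V + t by linarith)]
  have hx₀ : ‖x‖ ≠ 0 := norm_ne_zero_iff.2 hx
  have hx₁ : ‖x‖ₑ ≠ 0 := enorm_ne_zero.2 hx
  have dilation : (‖x‖ₑ ^ finrank ℝ V)⁻¹ * ∫⁻ ξ in closedBall 0 ‖x‖, ‖ξ‖ₑ ^ t ∂μ =
      ‖x‖ₑ ^ t * unitBallMoment μ t := by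
    have preimage_closedBall : (fun ξ : V => ‖x‖ • ξ) ⁻¹' closedBall 0 ‖x‖ = closedBall 0 1 := by
      rw [Set.preimage_smul₀ hx₀, smul_closedBall _ _ (norm_nonneg x)]
      simp [hx₀]
    have jacobian : ENNReal.ofReal |(‖x‖ ^ finrank ℝ V)⁻¹| = (‖x‖ₑ ^ finrank ℝ V)⁻¹ := by
      rw [abs_of_nonneg (by positivity), ENNReal.ofReal_inv_of_pos (by positivity),
        ENNReal.ofReal_pow (norm_nonneg x), ofReal_norm]
    have change_of_variables := setLIntegral_map (μ := μ) (f := fun ξ : V => ‖ξ‖ₑ ^ t)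
      (measurableSet_closedBall (x := 0) (ε := ‖x‖)) (by fun_prop) (measurable_const_smul ‖x‖)
    rw [Measure.map_addHaar_smul μ hx₀, Measure.restrict_smul, lintegral_smul_measure,
      preimage_closedBall, jacobian, smul_eq_mul] at change_of_variables
    rw [change_of_variables, unitBallMoment, ← lintegral_const_mul _ (by fun_prop)]
    refine lintegral_congr fun ξ => ?_
    rw [enorm_smul, enorm_norm, ENNReal.mul_rpow_of_ne_top enorm_ne_top enorm_ne_top]
  rw [← ENNReal.mul_right_inj (a := (‖x‖ₑ ^ finrank ℝ V)⁻¹) (by simp) (by simp [hx]), dilation,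
    ENNReal.rpow_add _ _ hx₁ enorm_ne_top, ENNReal.rpow_natCast, mul_left_comm,
    ENNReal.inv_mul_cancel_left (by simp [hx]) (by simp), mul_comm]

/-- Cauchy–Schwarz after inserting `‖η‖ ^ (t / 2) * ‖η‖ ^ (-t / 2) = 1`. -/
theorem sq_setLIntegral_closedBall_le (ht : t < finrank ℝ V) {f : V → ℝ≥0∞}
    (hf : AEMeasurable f μ) (x : V) :
    (∫⁻ η in closedBall 0 ‖x‖, f η ∂μ) ^ 2 ≤
      unitBallMoment μ (-t) * ‖x‖ₑ ^ (finrank ℝ V - t) * ∫⁻ η, ‖η‖ₑ ^ t * f η ^ 2 ∂μ := by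
  have split_weight : ∫⁻ η in closedBall 0 ‖x‖, f η ∂μ =
      ∫⁻ η in closedBall 0 ‖x‖, ‖η‖ₑ ^ (-t / 2) * (‖η‖ₑ ^ (t / 2) * f η) ∂μ := by
    refine lintegral_congr_ae ?_
    filter_upwards [ae_restrict_of_ae (Measure.ae_ne μ 0)] with η hη
    rw [← mul_assoc, ← ENNReal.rpow_add _ _ (by simpa using hη) enorm_ne_top]
    simp [neg_div]
  have sq_rpow_half (z : ℝ≥0∞) (u : ℝ) : (z ^ (u / 2)) ^ 2 = z ^ u := by
    rw [← ENNReal.rpow_mul_natCast]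
    norm_num
  calc (∫⁻ η in closedBall 0 ‖x‖, f η ∂μ) ^ 2
      ≤ (∫⁻ η in closedBall 0 ‖x‖, ‖η‖ₑ ^ (-t) ∂μ) *
          ∫⁻ η in closedBall 0 ‖x‖, ‖η‖ₑ ^ t * f η ^ 2 ∂μ := by
        rw [split_weight]
        simpa only [mul_pow, sq_rpow_half] using
          sq_lintegral_mul_le (μ := μ.restrict (closedBall 0 ‖x‖))
            (f := fun η => ‖η‖ₑ ^ (-t / 2)) (g := fun η => ‖η‖ₑ ^ (t / 2) * f η)
            (by fun_prop) (by fun_prop)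
    _ ≤ _ := by
        rw [setLIntegral_closedBall_enorm_rpow (by linarith), ← sub_eq_add_neg]
        gcongr
        exact Measure.restrict_le_self

theorem lintegral_enorm_rpow_mul_setLIntegral_compl_closedBall_le (ht : 0 < t) {f : V → ℝ≥0∞}
    (hf : Measurable f) :
    ∫⁻ ξ, ‖ξ‖ₑ ^ (t - finrank ℝ V) * ∫⁻ η in (closedBall 0 ‖ξ‖)ᶜ, f η ∂μ ∂μ ≤
      unitBallMoment μ (t - finrank ℝ V) * ∫⁻ η, ‖η‖ₑ ^ t * f η ∂μ := by
  set u := t - finrank ℝ V with hu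
  let S : Set (V × V) := {p | ‖p.1‖ < ‖p.2‖}
  have hS : MeasurableSet S := measurableSet_lt (by fun_prop) (by fun_prop)
  have inner_eq (ξ : V) : ‖ξ‖ₑ ^ u * ∫⁻ η in (closedBall 0 ‖ξ‖)ᶜ, f η ∂μ =
      ∫⁻ η, S.indicator (fun p => ‖p.1‖ₑ ^ u * f p.2) (ξ, η) ∂μ := by
    rw [← lintegral_const_mul _ hf, ← lintegral_indicator measurableSet_closedBall.compl]
    exact lintegral_congr fun η => by simp [Set.indicator, S]
  calc ∫⁻ ξ, ‖ξ‖ₑ ^ u * ∫⁻ η in (closedBall 0 ‖ξ‖)ᶜ, f η ∂μ ∂μ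
      = ∫⁻ η, ∫⁻ ξ, S.indicator (fun p => ‖p.1‖ₑ ^ u * f p.2) (ξ, η) ∂μ ∂μ := by
        simp only [inner_eq]
        exact lintegral_lintegral_swap (Measurable.indicator (by fun_prop) hS).aemeasurable
    _ ≤ ∫⁻ η, (∫⁻ ξ in closedBall 0 ‖η‖, ‖ξ‖ₑ ^ u ∂μ) * f η ∂μ := by
        refine lintegral_mono fun η => ?_
        rw [← lintegral_mul_const _ (by fun_prop), ← lintegral_indicator measurableSet_closedBall]
        refine lintegral_mono fun ξ => ?_
        simp only [Set.indicator_apply, S, Set.mem_ofPred_eq]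
        split_ifs <;> simp_all [le_of_lt]
    _ = unitBallMoment μ u * ∫⁻ η, ‖η‖ₑ ^ t * f η ∂μ := by
        rw [← lintegral_const_mul _ (by fun_prop)]
        refine lintegral_congr fun η => ?_
        rw [setLIntegral_closedBall_enorm_rpow (by linarith), hu, add_sub_cancel, mul_assoc]

theorem sq_lconvolution_le (ht : t < finrank ℝ V) {f g : V → ℝ≥0∞} (hf : Measurable f)
    (hg : Measurable g) (ξ : V) :
    (f ⋆ₗ[μ] g) ξ ^ 2 ≤ 2 *
      (unitBallMoment μ (-t) * ‖ξ‖ₑ ^ (finrank ℝ V - t) *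
          ((fun η => ‖η‖ₑ ^ t * f η ^ 2) ⋆ₗ[μ] fun η => g η ^ 2) ξ +
        (∫⁻ η in (closedBall 0 ‖ξ‖)ᶜ, f η ^ 2 ∂μ) * ∫⁻ η, g η ^ 2 ∂μ) := by
  have low : (∫⁻ η in closedBall 0 ‖ξ‖, f η * g (-η + ξ) ∂μ) ^ 2 ≤
      unitBallMoment μ (-t) * ‖ξ‖ₑ ^ (finrank ℝ V - t) *
        ((fun η => ‖η‖ₑ ^ t * f η ^ 2) ⋆ₗ[μ] fun η => g η ^ 2) ξ := by
    simpa only [lconvolution_def, mul_pow, mul_assoc] using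
      sq_setLIntegral_closedBall_le ht (f := fun η => f η * g (-η + ξ)) (by fun_prop) ξ
  have high : (∫⁻ η in (closedBall 0 ‖ξ‖)ᶜ, f η * g (-η + ξ) ∂μ) ^ 2 ≤
      (∫⁻ η in (closedBall 0 ‖ξ‖)ᶜ, f η ^ 2 ∂μ) * ∫⁻ η, g η ^ 2 ∂μ := by
    refine (sq_lintegral_mul_le (by fun_prop) (by fun_prop)).trans ?_
    refine mul_le_mul_right ?_ _
    calc ∫⁻ η in (closedBall 0 ‖ξ‖)ᶜ, g (-η + ξ) ^ 2 ∂μ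
        ≤ ∫⁻ η, g (-η + ξ) ^ 2 ∂μ := setLIntegral_le_lintegral _ _
      _ = ∫⁻ η, g η ^ 2 ∂μ := by
        simpa only [neg_add_eq_sub] using lintegral_sub_left_eq_self (fun η => g η ^ 2) ξ
  rw [lconvolution_def, ← lintegral_add_compl _ (measurableSet_closedBall (x := 0) (ε := ‖ξ‖))]
  refine le_trans ?_ (mul_le_mul_right (add_le_add low high) 2)
  simpa [one_add_one_eq_two, show (2 : ℝ) - 1 = 1 by norm_num] using
    ENNReal.rpow_add_le_mul_rpow_add_rpow _ _ one_le_two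

theorem lintegral_enorm_rpow_mul_sq_lconvolution_le (ht₀ : 0 < t) (ht : t < finrank ℝ V)
    {f g : V → ℝ≥0∞} (hf : Measurable f) (hg : Measurable g) :
    ∫⁻ ξ, ‖ξ‖ₑ ^ (t - finrank ℝ V) * (f ⋆ₗ[μ] g) ξ ^ 2 ∂μ ≤
      2 * (unitBallMoment μ (-t) + unitBallMoment μ (t - finrank ℝ V)) *
        (∫⁻ η, ‖η‖ₑ ^ t * f η ^ 2 ∂μ) * ∫⁻ η, g η ^ 2 ∂μ := by
  set u := t - finrank ℝ V with hu
  set m := unitBallMoment μ (-t)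
  set F : V → ℝ≥0∞ := fun η => ‖η‖ₑ ^ t * f η ^ 2
  set C := F ⋆ₗ[μ] fun η => g η ^ 2
  set T : V → ℝ≥0∞ := fun ξ => ∫⁻ η in (closedBall 0 ‖ξ‖)ᶜ, f η ^ 2 ∂μ
  set G := ∫⁻ η, g η ^ 2 ∂μ
  have hC : Measurable C := measurable_lconvolution μ (by fun_prop) (by fun_prop)
  have hT : Measurable T := measurable_setLIntegral_compl_closedBall _
  have pointwise (ξ : V) : ‖ξ‖ₑ ^ u * (f ⋆ₗ[μ] g) ξ ^ 2 ≤
      2 * (m * C ξ + ‖ξ‖ₑ ^ u * T ξ * G) := by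
    have weight_cancel : ‖ξ‖ₑ ^ u * ‖ξ‖ₑ ^ (finrank ℝ V - t) ≤ 1 := by
      rw [← neg_sub t, ← hu, ENNReal.rpow_neg]
      exact ENNReal.mul_inv_le_one _
    calc ‖ξ‖ₑ ^ u * (f ⋆ₗ[μ] g) ξ ^ 2
        ≤ ‖ξ‖ₑ ^ u * (2 * (m * ‖ξ‖ₑ ^ (finrank ℝ V - t) * C ξ + T ξ * G)) :=
          mul_le_mul_right (sq_lconvolution_le ht hf hg ξ) _
      _ = 2 * (m * C ξ * (‖ξ‖ₑ ^ u * ‖ξ‖ₑ ^ (finrank ℝ V - t)) + ‖ξ‖ₑ ^ u * T ξ * G) := by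
          ring
      _ ≤ 2 * (m * C ξ + ‖ξ‖ₑ ^ u * T ξ * G) := by
          refine mul_le_mul_right (add_le_add_left ?_ _) 2
          exact mul_le_of_le_one_right zero_le weight_cancel
  calc ∫⁻ ξ, ‖ξ‖ₑ ^ u * (f ⋆ₗ[μ] g) ξ ^ 2 ∂μ
      ≤ ∫⁻ ξ, 2 * (m * C ξ + ‖ξ‖ₑ ^ u * T ξ * G) ∂μ := lintegral_mono pointwise
    _ = 2 * (m * ∫⁻ ξ, C ξ ∂μ + (∫⁻ ξ, ‖ξ‖ₑ ^ u * T ξ ∂μ) * G) := by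
        rw [lintegral_const_mul _ (by fun_prop), lintegral_add_left (by fun_prop),
          lintegral_const_mul _ hC, lintegral_mul_const _ (by fun_prop)]
    _ ≤ 2 * (m * ((∫⁻ η, F η ∂μ) * G) + unitBallMoment μ u * (∫⁻ η, F η ∂μ) * G) := by
        gcongr
        · exact (lintegral_lconvolution (by fun_prop) (by fun_prop)).le
        · exact lintegral_enorm_rpow_mul_setLIntegral_compl_closedBall_le ht₀ (by fun_prop)
    _ = 2 * (m + unitBallMoment μ u) * (∫⁻ η, F η ∂μ) * G := by ring

end WeightedConvolution

section Schwartz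

variable {V F F₁ F₂ F₃ : Type*} [NormedAddCommGroup V]
  [NormedAddCommGroup F] [NormedAddCommGroup F₁] [NormedAddCommGroup F₂] [NormedAddCommGroup F₃]
  [MeasurableSpace V] [BorelSpace V]

theorem fourierInv_apply_neg [InnerProductSpace ℝ V] [FiniteDimensional ℝ V] [NormedSpace ℂ F]
    (f : 𝓢(V, F)) (ξ : V) : 𝓕⁻ f (-ξ) = 𝓕 f ξ := by
  simp [SchwartzMap.fourierInv_apply_eq]

theorem fourier_pairing_apply [InnerProductSpace ℝ V] [FiniteDimensional ℝ V] [NormedSpace ℂ F₁]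
    [NormedSpace ℂ F₂] [NormedSpace ℂ F₃] [CompleteSpace F₁] [CompleteSpace F₂] [CompleteSpace F₃]
    (B : F₁ →L[ℂ] F₂ →L[ℂ] F₃) (f : 𝓢(V, F₁)) (g : 𝓢(V, F₂)) (ξ : V) :
    𝓕 (SchwartzMap.pairing B f g) ξ = ∫ η, B (𝓕 f η) (𝓕 g (ξ - η)) := by
  have fourierInv_pairing : 𝓕⁻ (SchwartzMap.pairing B f g) =
      SchwartzMap.convolution B (𝓕⁻ f) (𝓕⁻ g) := by
    simp [SchwartzMap.convolution]
  rw [← fourierInv_apply_neg, fourierInv_pairing, SchwartzMap.convolution_apply, convolution_def,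
    ← integral_neg_eq_self]
  refine integral_congr_ae (.of_forall fun η => ?_)
  simp only [← fourierInv_apply_neg, neg_sub']

theorem integrable_norm_rpow_mul_sq_norm [NormedSpace ℝ V] [SecondCountableTopology V]
    [NormedSpace ℝ F] {μ : Measure V} [μ.HasTemperateGrowth] {t : ℝ} (ht : 0 ≤ t) (f : 𝓢(V, F)) :
    Integrable (fun ξ => ‖ξ‖ ^ t * ‖f ξ‖ ^ 2) μ := by
  have weight_le (ξ : V) : ‖ξ‖ ^ t ≤ 1 + ‖ξ‖ ^ ⌈t⌉₊ := by
    rcases le_total ‖ξ‖ 1 with h | h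
    · exact (Real.rpow_le_one (norm_nonneg ξ) h ht).trans (by simp)
    · refine le_add_of_nonneg_of_le zero_le_one ?_
      rw [← Real.rpow_natCast]
      exact Real.rpow_le_rpow_of_exponent_le h (Nat.le_ceil t)
  have dominating : Integrable (fun ξ => (‖f ξ‖ + ‖ξ‖ ^ ⌈t⌉₊ * ‖f ξ‖) * ‖f ξ‖) μ :=
    (f.integrable.norm.add (f.integrable_pow_mul μ _)).mul_bdd
      (c := SchwartzMap.seminorm ℝ 0 0 f) f.continuous.norm.aestronglyMeasurable
      (.of_forall fun ξ => by simpa using SchwartzMap.norm_le_seminorm ℝ f ξ)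
  refine dominating.mono' ?_ (.of_forall fun ξ => ?_)
  · have := f.continuous
    exact Continuous.aestronglyMeasurable (by fun_prop (disch := exact fun _ => .inr ht))
  · rw [Real.norm_of_nonneg (by positivity)]
    grw [weight_le ξ]
    apply le_of_eq
    ring

theorem ofReal_integral_norm_rpow_mul_sq_norm [NormedSpace ℝ V] [SecondCountableTopology V]
    [NormedSpace ℝ F] {μ : Measure V} [μ.HasTemperateGrowth] {t : ℝ} (ht : 0 ≤ t) (f : 𝓢(V, F)) :
    ENNReal.ofReal (∫ ξ, ‖ξ‖ ^ t * ‖f ξ‖ ^ 2 ∂μ) = ∫⁻ ξ, ‖ξ‖ₑ ^ t * ‖f ξ‖ₑ ^ 2 ∂μ := by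
  rw [ofReal_integral_eq_lintegral_ofReal (integrable_norm_rpow_mul_sq_norm ht f)
    (.of_forall fun ξ => by positivity)]
  refine lintegral_congr fun ξ => ?_
  rw [ENNReal.ofReal_mul (by positivity), ← ENNReal.ofReal_rpow_of_nonneg (norm_nonneg ξ) ht,
    ENNReal.ofReal_pow (norm_nonneg _), ofReal_norm, ofReal_norm]

theorem ofReal_norm_rpow_le (x : F) (t : ℝ) : ENNReal.ofReal (‖x‖ ^ t) ≤ ‖x‖ₑ ^ t := by
  rcases eq_or_ne x 0 with rfl | hx
  · rcases lt_trichotomy t 0 with ht | rfl | ht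
    · simp [ENNReal.zero_rpow_of_neg ht]
    · simp
    · simp [ht, Real.zero_rpow ht.ne']
  · rw [← ENNReal.ofReal_rpow_of_pos (norm_pos_iff.2 hx), ofReal_norm]

theorem enorm_fourier_mul_le_lconvolution [InnerProductSpace ℝ V] [FiniteDimensional ℝ V]
    (f g : 𝓢(V, ℂ)) (ξ : V) :
    ‖𝓕 (fun x => f x * g x) ξ‖ₑ ≤
      ((fun η => ‖𝓕 f η‖ₑ) ⋆ₗ[volume] fun η => ‖𝓕 g η‖ₑ) ξ := by
  have fourier_mul : 𝓕 (fun x => f x * g x) ξ = ∫ η, 𝓕 f η * 𝓕 g (ξ - η) :=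
    fourier_pairing_apply (ContinuousLinearMap.mul ℂ ℂ) f g ξ
  rw [fourier_mul, lconvolution_def]
  refine (enorm_integral_le_lintegral_enorm _).trans_eq (lintegral_congr fun η => ?_)
  rw [enorm_mul, neg_add_eq_sub]

theorem integral_norm_rpow_mul_sq_norm_fourier_mul_le [InnerProductSpace ℝ V]
    [FiniteDimensional ℝ V] [Nontrivial V] {t : ℝ} (ht₀ : 0 < t) (ht : t < finrank ℝ V)
    (f g : 𝓢(V, ℂ)) :
    ∫ ξ, ‖ξ‖ ^ (t - finrank ℝ V) * ‖𝓕 (fun x => f x * g x) ξ‖ ^ 2 ≤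
      (2 * (unitBallMoment (volume : Measure V) (-t) +
        unitBallMoment (volume : Measure V) (t - finrank ℝ V))).toReal *
        (∫ ξ, ‖ξ‖ ^ t * ‖𝓕 f ξ‖ ^ 2) * ∫ x, ‖g x‖ ^ 2 := by
  set K := 2 * (unitBallMoment (volume : Measure V) (-t) +
    unitBallMoment (volume : Measure V) (t - finrank ℝ V))
  have K_ne_top : K ≠ ⊤ := ENNReal.mul_ne_top ENNReal.ofNat_ne_top <| ENNReal.add_ne_top.2
    ⟨unitBallMoment_ne_top (by linarith), unitBallMoment_ne_top (by linarith)⟩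
  have plancherel : ENNReal.ofReal (∫ x, ‖g x‖ ^ 2) = ∫⁻ ξ, ‖𝓕 g ξ‖ₑ ^ 2 := by
    rw [← SchwartzMap.integral_norm_sq_fourier]
    simpa using ofReal_integral_norm_rpow_mul_sq_norm (μ := volume) le_rfl (𝓕 g)
  rw [← ENNReal.ofReal_le_ofReal_iff (by positivity), ENNReal.ofReal_mul (by positivity),
    ENNReal.ofReal_mul (by positivity), ENNReal.ofReal_toReal K_ne_top,
    ofReal_integral_norm_rpow_mul_sq_norm ht₀.le, plancherel]
  calc ENNReal.ofReal (∫ ξ, ‖ξ‖ ^ (t - finrank ℝ V) * ‖𝓕 (fun x => f x * g x) ξ‖ ^ 2)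
      ≤ ∫⁻ ξ, ‖‖ξ‖ ^ (t - finrank ℝ V) * ‖𝓕 (fun x => f x * g x) ξ‖ ^ 2‖ₑ := by
        rw [← Real.enorm_of_nonneg (by positivity)]
        exact enorm_integral_le_lintegral_enorm _
    _ ≤ ∫⁻ ξ, ‖ξ‖ₑ ^ (t - finrank ℝ V) *
          ((fun η => ‖𝓕 f η‖ₑ) ⋆ₗ[volume] fun η => ‖𝓕 g η‖ₑ) ξ ^ 2 := by
        refine lintegral_mono fun ξ => ?_
        rw [enorm_mul, enorm_pow, enorm_norm, Real.enorm_of_nonneg (by positivity)]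
        gcongr
        · exact ofReal_norm_rpow_le ξ _
        · exact enorm_fourier_mul_le_lconvolution f g ξ
    _ ≤ K * (∫⁻ η, ‖η‖ₑ ^ t * ‖𝓕 f η‖ₑ ^ 2) * ∫⁻ η, ‖𝓕 g η‖ₑ ^ 2 :=
        lintegral_enorm_rpow_mul_sq_lconvolution_le ht₀ ht
          (𝓕 f).continuous.measurable.enorm (𝓕 g).continuous.measurable.enorm

end Schwartz

theorem product_law_2d_general {d : ℕ} {s : ℝ} (hs : 0 < s) (hsd : s < d / 2) :
    ∃ C > (0 : ℝ), ∀ f g : 𝓢(E d, ℂ),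
      hNorm d (s - d / 2) (fun x => f x * g x) ≤
        C * hNorm d s f * (∫ x, ‖g x‖ ^ 2) ^ (1 / 2 : ℝ) := by
  have finrank_eq : finrank ℝ (E d) = d := finrank_euclideanSpace_fin
  have : Nontrivial (E d) := nontrivial_of_finrank_pos (R := ℝ) <| by
    rw [finrank_eq, ← Nat.cast_pos (α := ℝ)]
    linarith
  set K := (2 * (unitBallMoment (volume : Measure (E d)) (-(2 * s)) +
    unitBallMoment (volume : Measure (E d)) (2 * s - d))).toReal
  refine ⟨K ^ (1 / 2 : ℝ) + 1, by positivity, fun f g => ?_⟩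
  have sq_bound := integral_norm_rpow_mul_sq_norm_fourier_mul_le (t := 2 * s) (by linarith)
    (by rw [finrank_eq]; linarith) f g
  rw [finrank_eq] at sq_bound
  calc hNorm d (s - d / 2) (fun x => f x * g x)
      ≤ (K * (∫ ξ, ‖ξ‖ ^ (2 * s) * ‖𝓕 f ξ‖ ^ 2) * ∫ x, ‖g x‖ ^ 2) ^ (1 / 2 : ℝ) := by
        rw [hNorm, mul_sub, mul_div_cancel₀ _ two_ne_zero]
        exact Real.rpow_le_rpow (by positivity) sq_bound (by norm_num)
    _ = K ^ (1 / 2 : ℝ) * hNorm d s f * (∫ x, ‖g x‖ ^ 2) ^ (1 / 2 : ℝ) := by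
        rw [Real.mul_rpow (by positivity) (by positivity), Real.mul_rpow (by positivity)
          (by positivity), hNorm, SchwartzMap.fourier_coe]
    _ ≤ _ := by
        have : 0 ≤ hNorm d s f := Real.rpow_nonneg (by positivity) _
        gcongr
        linarith

/-- The Schwartz function with the values of a smooth compactly supported real function `u`. -/
def complexSchwartzMap {V : Type*} [NormedAddCommGroup V] [NormedSpace ℝ V] {u : V → ℝ}
    (hu : ContDiff ℝ (⊤ : ℕ∞) u) (huc : HasCompactSupport u) : 𝓢(V, ℂ) :=
  (huc.comp_left Complex.ofReal_zero).toSchwartzMap (Complex.ofRealCLM.contDiff.comp hu)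

@[simp]
theorem coe_complexSchwartzMap {V : Type*} [NormedAddCommGroup V] [NormedSpace ℝ V] {u : V → ℝ}
    (hu : ContDiff ℝ (⊤ : ℕ∞) u) (huc : HasCompactSupport u) :
    ⇑(complexSchwartzMap hu huc) = fun x => (u x : ℂ) :=
  rfl

/-- 2D product law `‖ab‖_{Ḣ^{-1/2}(ℝ²)} ≤ C ‖a‖_{Ḣ^{1/2}(ℝ²)} ‖b‖_{L²(ℝ²)}`. -/
theorem product_law_2d :
    ∃ C > (0:ℝ), ∀ a b : E 2 → ℝ,
      ContDiff ℝ (⊤ : ℕ∞) a → HasCompactSupport a → ContDiff ℝ (⊤ : ℕ∞) b → HasCompactSupport b →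
      hNorm 2 (-(1/2)) (fun x => ((a x * b x : ℝ) : ℂ)) ≤
        C * hNorm 2 (1/2) (fun x => ((a x : ℝ) : ℂ)) * (∫ x : E 2, (b x) ^ 2) ^ (1/2 : ℝ) := by
  obtain ⟨C, hC, product_law⟩ :=
    product_law_2d_general (d := 2) (s := 1 / 2) (by norm_num) (by norm_num)
  refine ⟨C, hC, fun a b ha hac hb hbc => ?_⟩
  have bound := product_law (complexSchwartzMap ha hac) (complexSchwartzMap hb hbc)
  norm_num at bound ⊢
  exact bound
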